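/- For any nonrecursive sets A and B, there exists a set C that is not generically computable but is both generically A-computable and generically B-computable. Consequently, there are no minimal pairs for generic computability. -/

import Mathlib

open Filter

/-- The counting function: number of elements of `A` below `n`, divided by `n`. -/
noncomputable def partialDensity (A : Set ℕ) (n : ℕ) : ℝ := ((A ∩ Set.Iio n).ncard : ℝ) / n

/-- `A ⊆ ℕ` has density `d` if the partial densities tend to `d`. -/
def HasDensity (A : Set ℕ) (d : ℝ) : Prop :=
  Tendsto (partialDensity A) atTop (nhds d)

/-- `A ⊆ ℕ` has density 1. -/
def Density1 (A : Set ℕ) : Prop := HasDensity A 1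

/-- Partial recursive functions relative to an oracle `O : ℕ →. ℕ`
(relativization of `Nat.Partrec`). -/
inductive RecIn (O : ℕ →. ℕ) : (ℕ →. ℕ) → Prop
  | zero : RecIn O (pure 0)
  | succ : RecIn O ↑(Nat.succ)
  | left : RecIn O ↑fun n : ℕ => n.unpair.1
  | right : RecIn O ↑fun n : ℕ => n.unpair.2
  | oracle : RecIn O O
  | pair {f g} : RecIn O f → RecIn O g → RecIn O fun n => Nat.pair <$> f n <*> g n
  | comp {f g} : RecIn O f → RecIn O g → RecIn O fun n => g n >>= f
  | prec {f g} : RecIn O f → RecIn O g → RecIn O (Nat.unpaired fun a n =>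
      n.rec (f a) fun y IH => do let i ← IH; g (Nat.pair a (Nat.pair y i)))
  | rfind {f} : RecIn O f → RecIn O fun a =>
      Nat.rfind fun n => (fun m => m = 0) <$> f (Nat.pair a n)

open Classical in
/-- The characteristic function of a set of naturals, as a (total) partial function. -/
noncomputable def chi (A : Set ℕ) : ℕ →. ℕ :=
  fun n => Part.some (if n ∈ A then 1 else 0)

/-- `A` Turing-computes `B`. -/
def TuringComputes (A B : Set ℕ) : Prop := RecIn (chi A) (chi B)

/-- `A` generically computes `C`: some `{0,1}`-valued partial function, partial recursive
in `A`, has density-1 domain and is correct about membership in `C` wherever defined. -/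
def GenericallyComputes (A C : Set ℕ) : Prop :=
  ∃ φ : ℕ →. ℕ, RecIn (chi A) φ ∧
    Density1 {n | (φ n).Dom} ∧
    (∀ n v, v ∈ φ n → v = 0 ∨ v = 1) ∧
    (∀ n, 1 ∈ φ n → n ∈ C) ∧ (∀ n, 0 ∈ φ n → n ∉ C)

/-- `C` is generically computable (no oracle). -/
def GenericallyComputable (C : Set ℕ) : Prop :=
  ∃ φ : ℕ →. ℕ, Nat.Partrec φ ∧
    Density1 {n | (φ n).Dom} ∧
    (∀ n v, v ∈ φ n → v = 0 ∨ v = 1) ∧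
    (∀ n, 1 ∈ φ n → n ∈ C) ∧ (∀ n, 0 ∈ φ n → n ∉ C)

namespace GenericPair

/-! ### Primitive recursive predicates -/

section Primrec

variable {α : Type*} [Primcodable α]

lemma primrecPred_forall_lt {f : α → ℕ} {p : α → ℕ → Prop} (hf : Primrec f)
    (hp : PrimrecRel p) : PrimrecPred fun a => ∀ x < f a, p a x :=
  (hp.swap.forall_mem_list.comp (Primrec.list_range.comp hf) Primrec.id).of_eq fun a => by
    simp [Function.swap]

lemma primrecPred_exists_lt {f : α → ℕ} {p : α → ℕ → Prop} (hf : Primrec f)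
    (hp : PrimrecRel p) : PrimrecPred fun a => ∃ x < f a, p a x :=
  (hp.swap.exists_mem_list.comp (Primrec.list_range.comp hf) Primrec.id).of_eq fun a => by
    simp [Function.swap]

lemma primrec_two_pow : Primrec fun n : ℕ => 2 ^ n :=
  (Primrec₂.unpaired'.1 Nat.Primrec.pow).comp (Primrec.const 2) Primrec.id

lemma primrec_div_two_pow {f g : α → ℕ} (hf : Primrec f) (hg : Primrec g) :
    Primrec fun a => f a / 2 ^ g a :=
  Primrec.nat_div.comp hf (primrec_two_pow.comp hg)

lemma primrec_log : Primrec (Nat.log 2) := by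
  refine (Primrec.nat_findGreatest (f := id) (p := fun x k => 2 ^ k ≤ x) Primrec.id
    (Primrec.nat_le.comp (primrec_two_pow.comp Primrec.snd) Primrec.fst)).of_eq fun x => ?_
  rcases eq_or_ne x 0 with rfl | hx
  · simp
  rw [id, Nat.findGreatest_eq_iff]
  refine ⟨Nat.log_le_self 2 x, fun _ => Nat.pow_log_le_self 2 hx, fun k hk _ h => ?_⟩
  exact absurd (Nat.le_log_of_pow_le (by norm_num) h) (by omega)

lemma rePred_exists {p : α → ℕ → Prop} (hp : PrimrecRel p) : REPred fun a => ∃ n, p a n := by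
  classical
  refine (Partrec.rfind (p := fun a n => Part.some (decide (p a n)))
    hp.decide.to_comp.partrec).dom_re.of_eq fun a => ?_
  refine Nat.rfind_dom.trans ?_
  simp

end Primrec

/-! ### Paths through the binary tree

The nodes of level `n` of the binary tree are the numbers in `[2 ^ n, 2 ^ (n + 1))`, and the parent
of a node `u` is `u / 2`. -/

/-- A path through the binary tree, given by its node on every level. -/
structure IsPath (f : ℕ → ℕ) : Prop where
  zero : f 0 = 1
  succ : ∀ n, f (n + 1) / 2 = f n

/-- The bit at position `i` of the binary string represented by the node `v`. -/
def nodeBit (v i : ℕ) : ℕ := v / 2 ^ (Nat.log 2 v - (i + 1)) % 2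

lemma nodeBit_div {v j i : ℕ} (h : i < Nat.log 2 (v / 2 ^ j)) :
    nodeBit (v / 2 ^ j) i = nodeBit v i := by
  unfold nodeBit
  rw [Nat.log_div_base_pow] at *
  rw [Nat.div_div_eq_div_mul, ← pow_add]
  congr 3
  omega

lemma log_of_level {n u : ℕ} (h₁ : 2 ^ n ≤ u) (h₂ : u < 2 ^ (n + 1)) : Nat.log 2 u = n :=
  (Nat.log_eq_iff (Or.inr ⟨by norm_num, by have := Nat.two_pow_pos n; omega⟩)).2 ⟨h₁, h₂⟩

lemma div_two_pow_bounds {n k u : ℕ} (hk : k ≤ n) (h₁ : 2 ^ n ≤ u) (h₂ : u < 2 ^ (n + 1)) :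
    2 ^ k ≤ u / 2 ^ (n - k) ∧ u / 2 ^ (n - k) < 2 ^ (k + 1) := by
  constructor
  · rw [Nat.le_div_iff_mul_le (by positivity), ← pow_add]
    rwa [Nat.add_sub_cancel' hk]
  · rw [Nat.div_lt_iff_lt_mul (by positivity), ← pow_add]
    convert h₂ using 2
    omega

namespace IsPath

variable {f : ℕ → ℕ}

lemma level (hf : IsPath f) (n : ℕ) : 2 ^ n ≤ f n ∧ f n < 2 ^ (n + 1) := by
  induction n with
  | zero => simp [hf.zero]
  | succ n ih =>
    have := hf.succ n
    rw [pow_succ, pow_succ _ (n + 1)]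
    omega

lemma log (hf : IsPath f) (n : ℕ) : Nat.log 2 (f n) = n :=
  log_of_level (hf.level n).1 (hf.level n).2

lemma div_pow (hf : IsPath f) (n i : ℕ) : f (n + i) / 2 ^ i = f n := by
  induction i with
  | zero => simp
  | succ i ih =>
    rw [pow_succ', ← Nat.div_div_eq_div_mul, ← add_assoc, hf.succ, ih]

lemma div_pow_sub (hf : IsPath f) {k n : ℕ} (h : k ≤ n) : f n / 2 ^ (n - k) = f k := by
  obtain ⟨i, rfl⟩ := Nat.exists_eq_add_of_le h
  simpa using hf.div_pow k i

lemma nodeBit_eq (hf : IsPath f) {i k n : ℕ} (h : i < k) (hn : k ≤ n) :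
    nodeBit (f n) i = nodeBit (f k) i := by
  rw [← hf.div_pow_sub hn, nodeBit_div]
  rwa [hf.div_pow_sub hn, hf.log]

lemma nodeBit_succ (hf : IsPath f) (i : ℕ) : nodeBit (f (i + 1)) i = f (i + 1) % 2 := by
  simp [nodeBit, hf.log]

end IsPath

/-- The path whose bits are given by `z`. -/
def pathOf (z : ℕ → ℕ) : ℕ → ℕ
  | 0 => 1
  | n + 1 => 2 * pathOf z n + z n

lemma isPath_pathOf {z : ℕ → ℕ} (hz : ∀ i, z i < 2) : IsPath (pathOf z) where
  zero := rfl
  succ n := by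
    have := hz n
    simp only [pathOf]
    omega

lemma nodeBit_pathOf {z : ℕ → ℕ} (hz : ∀ i, z i < 2) {i n : ℕ} (h : i < n) :
    nodeBit (pathOf z n) i = z i := by
  have hp := isPath_pathOf hz
  rw [hp.nodeBit_eq (Nat.lt_succ_self i) h, hp.nodeBit_succ]
  have := hz i
  simp only [pathOf]
  omega

/-- A form of Kőnig's lemma: the greatest nodes of the levels of an infinite binary tree converge
to a path. -/
lemma exists_path_of_max {Q : ℕ → ℕ → Prop} {M : ℕ → ℕ} {n₁ : ℕ}
    (hlev : ∀ n u, Q n u → 2 ^ n ≤ u ∧ u < 2 ^ (n + 1))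
    (hpar : ∀ n ≥ n₁, ∀ u, Q (n + 1) u → Q n (u / 2))
    (hM : ∀ n ≥ n₁, Q n (M n)) (hmax : ∀ n ≥ n₁, ∀ u, Q n u → u ≤ M n) :
    ∃ g, IsPath g ∧ (∀ k, ∀ᶠ n in atTop, M n / 2 ^ (n - k) = g k) ∧ ∀ k ≥ n₁, Q k (g k) := by
  have hconv : ∀ k, ∃ v, ∀ᶠ n in atTop, M n / 2 ^ (n - k) = v := by
    intro k
    have hanti : Antitone fun i => M (n₁ + k + i) / 2 ^ (n₁ + i) := by
      refine antitone_nat_of_succ_le fun i => ?_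
      rw [← add_assoc, ← add_assoc, pow_succ', ← Nat.div_div_eq_div_mul]
      exact Nat.div_le_div_right
        (hmax _ (by omega) _ (hpar _ (by omega) _ (hM _ (by omega))))
    obtain ⟨_, ⟨i, rfl⟩, hi⟩ := wellFounded_lt.has_min
      (Set.range fun i => M (n₁ + k + i) / 2 ^ (n₁ + i)) (Set.range_nonempty _)
    refine ⟨M (n₁ + k + i) / 2 ^ (n₁ + i), eventually_atTop.2 ⟨n₁ + k + i, fun n hn => ?_⟩⟩
    obtain ⟨j, rfl⟩ := Nat.exists_eq_add_of_le hn
    have h₁ : n₁ + k + i + j - k = n₁ + (i + j) := by omega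
    rw [h₁, add_assoc]
    exact le_antisymm (hanti (Nat.le_add_right i j)) (not_lt.1 (hi _ ⟨i + j, rfl⟩))
  choose g hg using hconv
  have hdesc : ∀ n i, n₁ ≤ n → ∀ u, Q (n + i) u → Q n (u / 2 ^ i) := by
    intro n i hn
    induction i with
    | zero => simp
    | succ i ih =>
      intro u hu
      rw [pow_succ', ← Nat.div_div_eq_div_mul]
      exact ih _ (hpar _ (by omega) _ hu)
  refine ⟨g, ⟨?_, fun k => ?_⟩, hg, fun k hk => ?_⟩
  · obtain ⟨n, hn, h⟩ := ((hg 0).and (eventually_ge_atTop n₁)).exists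
    have := div_two_pow_bounds (Nat.zero_le n) (hlev n _ (hM n h)).1 (hlev n _ (hM n h)).2
    rw [hn] at this
    norm_num at this
    omega
  · obtain ⟨n, ⟨hn, hn'⟩, h⟩ := (((hg k).and (hg (k + 1))).and (eventually_ge_atTop (k + 1))).exists
    rw [← hn, ← hn', Nat.div_div_eq_div_mul, ← pow_succ]
    congr 2
    omega
  · obtain ⟨n, hn, h⟩ := ((hg k).and (eventually_ge_atTop k)).exists
    obtain ⟨i, rfl⟩ := Nat.exists_eq_add_of_le h
    rw [← hn, Nat.add_sub_cancel_left]
    exact hdesc k i hk _ (hM _ (by omega))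

open Classical in
lemma exists_path_of_forall_level {Q : ℕ → ℕ → Prop} {n₁ : ℕ}
    (hlev : ∀ n u, Q n u → 2 ^ n ≤ u ∧ u < 2 ^ (n + 1))
    (hpar : ∀ n ≥ n₁, ∀ u, Q (n + 1) u → Q n (u / 2))
    (hQ : ∀ n ≥ n₁, ∃ u, Q n u) : ∃ g, IsPath g ∧ ∀ k ≥ n₁, Q k (g k) := by
  obtain ⟨g, hg, -, h⟩ := exists_path_of_max (M := fun n => Nat.findGreatest (Q n) (2 ^ (n + 1)))
    hlev hpar
    (fun n hn => by
      obtain ⟨u, hu⟩ := hQ n hn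
      exact Nat.findGreatest_spec (hlev n u hu).2.le hu)
    (fun n _ u hu => Nat.le_findGreatest (hlev n u hu).2.le hu)
  exact ⟨g, hg, h⟩

/-! ### The strategy for a single requirement

At stage `n` the strategy tests a node of the binary tree. A node tested at stage `n'` is discarded
once `conv n' n` holds. The strategy follows the rightmost infinite path through the nodes that
extend no discarded node, among the paths having a prefix `v` of minimal length with `ok v`. It
tests the shortest prefix of that path which has not been tested yet. -/

section Strategy

variable (conv ok : ℕ → ℕ → Prop)

/-- The node `u` of level `n` extends none of the nodes discarded by stage `n`, where `used` lists
the nodes tested before stage `n`. -/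
def Live (used : List ℕ) (n u : ℕ) : Prop :=
  2 ^ n ≤ u ∧ u < 2 ^ (n + 1) ∧
    ∀ n' < n, conv n' n → ∀ i < n + 1, u / 2 ^ i ≠ used.getD n' 0

open Classical in
/-- The stage `n` approximation to the path followed by the strategy, and `0` if there is none. -/
noncomputable def best (used : List ℕ) (n : ℕ) : ℕ :=
  Nat.findGreatest
    (fun u => Live conv used n u ∧ ok (u / 2 ^ Nat.findGreatest
      (fun j => ∃ u < 2 ^ (n + 1), Live conv used n u ∧ ok (u / 2 ^ j) n) n) n)
    (2 ^ (n + 1))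

open Classical in
/-- The node tested at stage `n`, and `0` if there is none. -/
noncomputable def step (used : List ℕ) (n : ℕ) : ℕ :=
  best conv ok used n /
    2 ^ Nat.findGreatest (fun i => ∀ n' < n, used.getD n' 0 ≠ best conv ok used n / 2 ^ i) n

/-- The list of the nodes tested before stage `n`. -/
noncomputable def tests : ℕ → List ℕ
  | 0 => []
  | n + 1 => tests n ++ [step conv ok (tests n) n]

/-- The node tested at stage `n`. -/
noncomputable def test (n : ℕ) : ℕ := step conv ok (tests conv ok n) n

/-- The approximation at stage `n` to the path followed by the strategy. -/
noncomputable def approx (n : ℕ) : ℕ := best conv ok (tests conv ok n) n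

/-- The node `u` of level `n` extends no node discarded by stage `n`. -/
def Alive (n u : ℕ) : Prop := Live conv (tests conv ok n) n u

variable {conv ok}

lemma length_tests (n : ℕ) : (tests conv ok n).length = n := by
  induction n with
  | zero => rfl
  | succ n ih => simp [tests, ih]

lemma getD_tests {n' n : ℕ} (h : n' < n) : (tests conv ok n).getD n' 0 = test conv ok n' := by
  induction n with
  | zero => omega
  | succ n ih =>
    rw [tests]
    rcases Nat.lt_succ_iff_lt_or_eq.1 h with h' | rfl
    · rw [List.getD_append _ _ _ _ (by rwa [length_tests]), ih h']
    · rw [List.getD_append_right _ _ _ _ (by rw [length_tests])]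
      simp [length_tests, test]

lemma alive_iff {n u : ℕ} : Alive conv ok n u ↔ 2 ^ n ≤ u ∧ u < 2 ^ (n + 1) ∧
    ∀ n' < n, conv n' n → ∀ i ≤ n, u / 2 ^ i ≠ test conv ok n' := by
  unfold Alive Live
  refine and_congr_right fun _ => and_congr_right fun _ => forall₂_congr fun n' h => ?_
  simp only [getD_tests h, Nat.lt_succ_iff]

lemma Alive.level {n u : ℕ} (h : Alive conv ok n u) : 2 ^ n ≤ u ∧ u < 2 ^ (n + 1) :=
  ⟨h.1, h.2.1⟩

lemma Alive.parent (hmono : ∀ n s t, s ≤ t → conv n s → conv n t) {n u : ℕ}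
    (h : Alive conv ok (n + 1) u) : Alive conv ok n (u / 2) := by
  rw [alive_iff] at h ⊢
  obtain ⟨h₁, h₂, h₃⟩ := h
  rw [pow_succ] at h₁ h₂
  refine ⟨by omega, by omega, fun n' hn' hc i hi => ?_⟩
  rw [Nat.div_div_eq_div_mul, ← pow_succ']
  exact h₃ n' (by omega) (hmono _ _ _ n.le_succ hc) _ (by omega)

lemma Alive.ancestor (hmono : ∀ n s t, s ≤ t → conv n s → conv n t) {n i u : ℕ}
    (h : Alive conv ok (n + i) u) : Alive conv ok n (u / 2 ^ i) := by
  induction i generalizing u with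
  | zero => simpa using h
  | succ i ih =>
    rw [pow_succ', ← Nat.div_div_eq_div_mul]
    exact ih (Alive.parent hmono h)

lemma approx_spec {n k : ℕ} (hk : k ≤ n)
    (hex : ∃ u, Alive conv ok n u ∧ ok (u / 2 ^ (n - k)) n)
    (hno : ∀ k' < k, ¬ ∃ u, Alive conv ok n u ∧ ok (u / 2 ^ (n - k')) n) :
    (Alive conv ok n (approx conv ok n) ∧ ok (approx conv ok n / 2 ^ (n - k)) n) ∧
      ∀ u, Alive conv ok n u → ok (u / 2 ^ (n - k)) n → u ≤ approx conv ok n := by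
  classical
  obtain ⟨u, hu, huk⟩ := hex
  have hj : Nat.findGreatest
      (fun j => ∃ u < 2 ^ (n + 1), Live conv (tests conv ok n) n u ∧ ok (u / 2 ^ j) n) n
        = n - k := by
    rw [Nat.findGreatest_eq_iff]
    refine ⟨Nat.sub_le _ _, fun _ => ⟨u, hu.level.2, hu, huk⟩, fun j hj hjn => ?_⟩
    rintro ⟨u', -, hu', hok⟩
    refine hno (n - j) (by omega) ⟨u', hu', ?_⟩
    rwa [Nat.sub_sub_self hjn]
  unfold approx best
  rw [hj]
  exact ⟨Nat.findGreatest_spec (P := fun u => Live conv (tests conv ok n) n u ∧ ok (u / 2 ^ (n - k)) n)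
      hu.level.2.le ⟨hu, huk⟩,
    fun u' hu' hok => Nat.le_findGreatest hu'.level.2.le ⟨hu', hok⟩⟩

lemma alive_approx {n : ℕ} (h : approx conv ok n ≠ 0) : Alive conv ok n (approx conv ok n) := by
  classical
  exact (Nat.findGreatest_of_ne_zero (P := fun u => Live conv (tests conv ok n) n u ∧ _) rfl h).1

lemma test_eq_zero_of_approx {n : ℕ} (h : approx conv ok n = 0) : test conv ok n = 0 := by
  rw [approx] at h
  rw [test, step, h, Nat.zero_div]

lemma test_eq_zero {n : ℕ} (h : ∀ u, ¬ Alive conv ok n u) : test conv ok n = 0 :=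
  test_eq_zero_of_approx (by_contra fun h₀ => h _ (alive_approx h₀))

lemma test_le_approx (n : ℕ) : test conv ok n ≤ approx conv ok n := Nat.div_le_self _ _

lemma test_spec {n : ℕ} (h : approx conv ok n ≠ 0) :
    ∃ i ≤ n, test conv ok n = approx conv ok n / 2 ^ i ∧
      (∀ n' < n, test conv ok n' ≠ test conv ok n) ∧
      ∀ j ≤ n, (∀ n' < n, test conv ok n' ≠ approx conv ok n / 2 ^ j) → j ≤ i := by
  classical
  set P : ℕ → Prop := fun i => ∀ n' < n, test conv ok n' ≠ approx conv ok n / 2 ^ i with hP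
  have ht : test conv ok n = approx conv ok n / 2 ^ Nat.findGreatest P n := by
    rw [test, step]
    congr 3
    funext i
    rw [hP, eq_iff_iff]
    exact forall₂_congr fun n' hn' => by rw [getD_tests hn']; rfl
  have h0 : P 0 := by
    intro n' hn' he
    have h₁ := (alive_approx h).level.1
    have h₂ := test_le_approx (conv := conv) (ok := ok) n'
    rw [pow_zero, Nat.div_one] at he
    have h₃ : approx conv ok n' ≠ 0 := by have := Nat.two_pow_pos n; omega
    have h₄ := (alive_approx h₃).level.2
    have h₅ : 2 ^ (n' + 1) ≤ 2 ^ n := Nat.pow_le_pow_right (by norm_num) hn'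
    omega
  refine ⟨Nat.findGreatest P n, Nat.findGreatest_le n, ht, fun n' hn' => ?_, fun j hj hu => ?_⟩
  · rw [ht]
    exact Nat.findGreatest_spec (P := P) (Nat.zero_le n) h0 n' hn'
  · exact Nat.le_findGreatest hj hu

/-- If some path through the alive nodes has an acceptable prefix, then the strategy converges to
such a path. -/
lemma exists_limit_path (hmono : ∀ n s t, s ≤ t → conv n s → conv n t)
    (hconst : ∀ v, (∀ᶠ n in atTop, ok v n) ∨ ∀ᶠ n in atTop, ¬ ok v n)
    {f : ℕ → ℕ} (hf : IsPath f) (hlive : ∀ n, Alive conv ok n (f n)) {k₀ : ℕ}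
    (hk₀ : ∀ᶠ n in atTop, ok (f k₀) n) :
    ∃ g, IsPath g ∧ (∀ n, Alive conv ok n (g n)) ∧ (∃ k, ∀ᶠ n in atTop, ok (g k) n) ∧
      ∀ k, ∀ᶠ n in atTop, approx conv ok n / 2 ^ (n - k) = g k := by
  classical
  have hG : ∃ k v, (∀ᶠ n in atTop, ok v n) ∧
      ∀ n ≥ k, ∃ u, Alive conv ok n u ∧ u / 2 ^ (n - k) = v :=
    ⟨k₀, f k₀, hk₀, fun n hn => ⟨f n, hlive n, hf.div_pow_sub hn⟩⟩
  obtain ⟨v, hv, hvlive⟩ := Nat.find_spec hG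
  have hmin := fun k' (h : k' < Nat.find hG) => Nat.find_min hG h
  set k := Nat.find hG
  have hbad : ∀ᶠ n in atTop, ∀ k' ∈ Set.Iio k,
      ¬ ∃ u, Alive conv ok n u ∧ ok (u / 2 ^ (n - k')) n := by
    rw [eventually_all_finite (Set.finite_Iio k)]
    intro k' hk'
    have h : ∀ᶠ n in atTop, ∀ v ∈ Set.Iio (2 ^ (k' + 1)),
        ¬ (ok v n ∧ ∃ u, Alive conv ok n u ∧ u / 2 ^ (n - k') = v) := by
      rw [eventually_all_finite (Set.finite_Iio _)]
      intro v _
      by_cases hokv : ∀ᶠ n in atTop, ok v n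
      · have := hmin k' hk'
        push Not at this
        obtain ⟨n, hn, hdead⟩ := this v hokv
        filter_upwards [eventually_ge_atTop n] with m hm
        rintro ⟨-, u, hu, huv⟩
        obtain ⟨i, rfl⟩ := Nat.exists_eq_add_of_le hm
        refine hdead _ (hu.ancestor hmono) ?_
        rw [← huv, Nat.div_div_eq_div_mul, ← pow_add]
        congr 2
        omega
      · filter_upwards [(hconst v).resolve_left hokv] with n hn h using hn h.1
    filter_upwards [h, eventually_ge_atTop k'] with n hn hkn
    rintro ⟨u, hu, hok⟩
    exact hn _ (div_two_pow_bounds hkn hu.level.1 hu.level.2).2 ⟨hok, u, hu, rfl⟩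
  have hgood : ∀ᶠ n in atTop, ∀ v ∈ Set.Iio (2 ^ (k + 1)),
      (ok v n ↔ ∀ᶠ m in atTop, ok v m) := by
    rw [eventually_all_finite (Set.finite_Iio _)]
    intro v _
    rcases hconst v with h | h
    · filter_upwards [h] with n hn using iff_of_true hn h
    · filter_upwards [h] with n hn
      refine iff_of_false hn fun h' => ?_
      obtain ⟨m, h₁, h₂⟩ := (h.and h').exists
      exact h₁ h₂
  obtain ⟨N, hN⟩ := eventually_atTop.1 (hbad.and (hgood.and (eventually_ge_atTop k)))
  have hiff : ∀ n ≥ N, ∀ u, Alive conv ok n u →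
      (ok (u / 2 ^ (n - k)) n ↔ ∀ᶠ m in atTop, ok (u / 2 ^ (n - k)) m) := fun n hn u hu =>
    (hN n hn).2.1 _ (div_two_pow_bounds (hN n hn).2.2 hu.level.1 hu.level.2).2
  have hspec : ∀ n ≥ N, _ := fun n hn => approx_spec (conv := conv) (ok := ok) (hN n hn).2.2
    (by
      obtain ⟨u, hu, huv⟩ := hvlive n (hN n hn).2.2
      exact ⟨u, hu, (hiff n hn u hu).2 (huv ▸ hv)⟩)
    (hN n hn).1
  obtain ⟨g, hg, hlim, hQ⟩ := exists_path_of_max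
    (Q := fun n u => Alive conv ok n u ∧ ∀ᶠ m in atTop, ok (u / 2 ^ (n - k)) m)
    (M := approx conv ok) (n₁ := N) (fun n u h => h.1.level)
    (fun n hn u h => ⟨h.1.parent hmono, by
      rw [Nat.div_div_eq_div_mul, ← pow_succ']
      have := (hN n hn).2.2
      rw [show n - k + 1 = n + 1 - k by omega]
      exact h.2⟩)
    (fun n hn => ⟨(hspec n hn).1.1, (hiff n hn _ (hspec n hn).1.1).1 (hspec n hn).1.2⟩)
    (fun n hn u h => (hspec n hn).2 u h.1 ((hiff n hn _ h.1).2 h.2))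
  refine ⟨g, hg, fun n => ?_, ⟨k, ?_⟩, hlim⟩
  · rw [← hg.div_pow n N]
    exact ((hQ (n + N) (by omega)).1).ancestor hmono
  · have := (hQ N le_rfl).2
    rwa [hg.div_pow_sub (hN N le_rfl).2.2] at this

section Limit

variable {g : ℕ → ℕ}

lemma eventually_approx_ne_zero (hg : IsPath g)
    (hlim : ∀ k, ∀ᶠ n in atTop, approx conv ok n / 2 ^ (n - k) = g k) :
    ∀ᶠ n in atTop, approx conv ok n ≠ 0 := by
  filter_upwards [hlim 0] with n hn h
  rw [h, Nat.zero_div, hg.zero] at hn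
  omega

lemma tendsto_test (hg : IsPath g)
    (hlim : ∀ k, ∀ᶠ n in atTop, approx conv ok n / 2 ^ (n - k) = g k) :
    Tendsto (test conv ok) atTop atTop := by
  obtain ⟨N, hN⟩ := eventually_atTop.1 (eventually_approx_ne_zero hg hlim)
  have hne : ∀ m n, m < n → N ≤ n → test conv ok m ≠ test conv ok n := fun m n hmn hn => by
    obtain ⟨i, -, -, h, -⟩ := test_spec (hN n hn)
    exact h m hmn
  rw [← tendsto_add_atTop_iff_nat N]
  refine Function.Injective.nat_tendsto_atTop fun m n h => ?_
  rcases lt_trichotomy m n with h' | h' | h'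
  · exact absurd h (hne _ _ (by omega) (by omega))
  · exact h'
  · exact absurd h.symm (hne _ _ (by omega) (by omega))

/-- Every node of the limit path is tested. -/
lemma exists_test_eq (hg : IsPath g)
    (hlim : ∀ k, ∀ᶠ n in atTop, approx conv ok n / 2 ^ (n - k) = g k) (k : ℕ) :
    ∃ n, test conv ok n = g k := by
  by_contra! h
  obtain ⟨n, ⟨hn, h₀⟩, h₁⟩ := (((hlim k).and (eventually_approx_ne_zero hg hlim)).and
    (((tendsto_test hg hlim).eventually_ge_atTop (2 ^ (k + 1))))).exists
  obtain ⟨i, hi, ht, -, hmax⟩ := test_spec h₀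
  have hki := hmax (n - k) (Nat.sub_le _ _) fun n' _ => by rw [hn]; exact h n'
  have : test conv ok n ≤ g k := by
    rw [ht, ← hn]
    exact Nat.div_le_div_left (Nat.pow_le_pow_right (by norm_num) hki) (by positivity)
  have := (hg.level k).2
  omega

/-- If almost all tests converge, then no path through the alive nodes is the limit path. -/
lemma not_eventually_conv (hmono : ∀ n s t, s ≤ t → conv n s → conv n t) (hg : IsPath g)
    (hlim : ∀ k, ∀ᶠ n in atTop, approx conv ok n / 2 ^ (n - k) = g k)
    (hlive : ∀ n, Alive conv ok n (g n)) : ¬ ∀ᶠ n in atTop, ∃ s, conv n s := by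
  intro h
  obtain ⟨N, hN⟩ := eventually_atTop.1 h
  set k := ∑ n ∈ Finset.range N, test conv ok n with hk
  obtain ⟨n, hn⟩ := exists_test_eq hg hlim k
  have hnN : N ≤ n := by
    by_contra! hlt
    have h₁ := Finset.single_le_sum (f := test conv ok) (fun _ _ => Nat.zero_le _)
      (Finset.mem_range.2 hlt)
    have h₂ := (hg.level k).1
    have h₃ := Nat.lt_two_pow_self (n := k)
    omega
  obtain ⟨s, hs⟩ := hN n hnN
  have hl := (alive_iff.1 (hlive (k + (s + n + 1)))).2.2 n (by omega)
    (hmono _ _ _ (by omega) hs) (s + n + 1) (by omega)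
  rw [hg.div_pow, hn] at hl
  exact hl rfl

lemma eventually_nodeBit_test (hg : IsPath g)
    (hlim : ∀ k, ∀ᶠ n in atTop, approx conv ok n / 2 ^ (n - k) = g k) (i : ℕ) :
    ∀ᶠ n in atTop, i < Nat.log 2 (test conv ok n) ∧
      nodeBit (test conv ok n) i = nodeBit (g (i + 1)) i := by
  filter_upwards [hlim (i + 1), eventually_approx_ne_zero hg hlim,
    (tendsto_test hg hlim).eventually_ge_atTop (2 ^ (i + 1))] with n hn h₀ h₁
  obtain ⟨j, -, ht, -⟩ := test_spec h₀
  have hi : i < Nat.log 2 (test conv ok n) :=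
    Nat.lt_of_succ_le (Nat.le_log_of_pow_le (by norm_num) h₁)
  refine ⟨hi, ?_⟩
  rw [ht] at hi ⊢
  rw [nodeBit_div hi, ← hn, nodeBit_div]
  rw [hn, hg.log]
  exact Nat.lt_succ_self i

end Limit

/-- If no node is alive any more, then every path has a discarded prefix. -/
lemma exists_test_of_not_alive {N : ℕ} (h : ∀ u, ¬ Alive conv ok N u) {f : ℕ → ℕ} (hf : IsPath f) :
    ∃ n < N, conv n N ∧ ∃ k, test conv ok n = f k := by
  by_contra! hno
  refine h (f N) (alive_iff.2 ⟨(hf.level N).1, (hf.level N).2, fun n hn hc i hi he => ?_⟩)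
  refine hno n hn hc (N - i) ?_
  rw [← he, ← hf.div_pow_sub (Nat.sub_le N i), Nat.sub_sub_self hi]

lemma eventually_test_eq_zero (hmono : ∀ n s t, s ≤ t → conv n s → conv n t) {N : ℕ}
    (h : ∀ u, ¬ Alive conv ok N u) : ∀ᶠ n in atTop, test conv ok n = 0 := by
  filter_upwards [eventually_ge_atTop N] with n hn
  obtain ⟨i, rfl⟩ := Nat.exists_eq_add_of_le hn
  exact test_eq_zero fun u hu => h _ (hu.ancestor hmono)

lemma exists_alive_path (hmono : ∀ n s t, s ≤ t → conv n s → conv n t) {v k : ℕ}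
    (h : ∀ n ≥ k, ∃ u, Alive conv ok n u ∧ u / 2 ^ (n - k) = v) :
    ∃ f, IsPath f ∧ (∀ n, Alive conv ok n (f n)) ∧ f k = v := by
  obtain ⟨f, hf, hQ⟩ := exists_path_of_forall_level
    (Q := fun n u => Alive conv ok n u ∧ u / 2 ^ (n - k) = v) (n₁ := k)
    (fun n u hu => hu.1.level)
    (fun n hn u hu => ⟨hu.1.parent hmono, by
      rw [Nat.div_div_eq_div_mul, ← pow_succ', show n - k + 1 = n + 1 - k by omega]
      exact hu.2⟩) h
  refine ⟨f, hf, fun n => ?_, by simpa using (hQ k le_rfl).2⟩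
  rw [← hf.div_pow n k]
  exact (hQ (n + k) (by omega)).1.ancestor hmono

end Strategy

lemma primrec_nodeBit : Primrec₂ nodeBit :=
  Primrec.nat_mod.comp
    (primrec_div_two_pow Primrec.fst
      (Primrec.nat_sub.comp (primrec_log.comp Primrec.fst) (Primrec.succ.comp Primrec.snd)))
    (Primrec.const 2)

open Classical in
/-- The indicator function of a set of natural numbers. -/
noncomputable def ind (D : Set ℕ) (i : ℕ) : ℕ := if i ∈ D then 1 else 0

/-- Some bit of the path `f` at a position `2 * i + c` differs from the `i`-th bit of `D`. -/
def Disagrees (D : Set ℕ) (c : ℕ) (f : ℕ → ℕ) : Prop :=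
  ∃ i, nodeBit (f (2 * i + c + 1)) (2 * i + c) ≠ ind D i

lemma computablePred_of_not_disagrees {conv ok : ℕ → ℕ → Prop}
    (hmono : ∀ n s t, s ≤ t → conv n s → conv n t) (hprim : PrimrecRel (Alive conv ok))
    {D : Set ℕ} {c k v : ℕ} (hv : ∀ n ≥ k, ∃ u, Alive conv ok n u ∧ u / 2 ^ (n - k) = v)
    (hall : ∀ f, IsPath f → (∀ n, Alive conv ok n (f n)) → f k = v → ¬ Disagrees D c f) :
    ComputablePred (· ∈ D) := by
  set S : ℕ → ℕ → ℕ → Prop := fun b i n => (k ≤ n ∧ 2 * i + c + 1 ≤ n) ∧ ∀ u < 2 ^ (n + 1),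
    ¬ (Alive conv ok n u ∧ u / 2 ^ (n - k) = v) ∨ nodeBit u (2 * i + c) = b with hS
  have hSprim : ∀ b, PrimrecRel (S b) := by
    intro b
    have hi : Primrec fun a : ℕ × ℕ => 2 * a.1 + c :=
      Primrec.nat_add.comp (Primrec.nat_mul.comp (Primrec.const 2) Primrec.fst) (Primrec.const c)
    refine ((Primrec.nat_le.comp (Primrec.const k) Primrec.snd).and
      (Primrec.nat_le.comp (Primrec.succ.comp hi) Primrec.snd)).and
      (primrecPred_forall_lt (primrec_two_pow.comp (Primrec.succ.comp Primrec.snd)) ?_)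
    have hn : Primrec fun a : (ℕ × ℕ) × ℕ => a.1.2 := Primrec.snd.comp Primrec.fst
    exact ((hprim.comp hn Primrec.snd).and (Primrec.eq.comp (primrec_div_two_pow Primrec.snd
      (Primrec.nat_sub.comp hn (Primrec.const k))) (Primrec.const v))).not.or
      (Primrec.eq.comp (primrec_nodeBit.comp Primrec.snd (hi.comp Primrec.fst)) (Primrec.const b))
  have hiff : ∀ b i, (∃ n, S b i n) ↔ ind D i = b := by
    intro b i
    constructor
    · rintro ⟨n, ⟨hkn, hin⟩, h⟩
      obtain ⟨f, hf, hlive, hfk⟩ := exists_alive_path hmono hv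
      have h₁ := hall f hf hlive hfk
      simp only [Disagrees, not_exists, not_not] at h₁
      rw [← h₁ i, ← hf.nodeBit_eq (Nat.lt_succ_self _) hin]
      exact (h (f n) (hf.level n).2).resolve_left
        (not_not.2 ⟨hlive n, by rw [hf.div_pow_sub hkn, hfk]⟩)
    · intro hb
      by_contra! hno
      simp only [hS, not_and, not_forall, not_or, not_not] at hno
      obtain ⟨f, hf, hQ⟩ := exists_path_of_forall_level
        (Q := fun n u => (Alive conv ok n u ∧ u / 2 ^ (n - k) = v) ∧ nodeBit u (2 * i + c) ≠ b)
        (n₁ := max k (2 * i + c + 1)) (fun n u hu => hu.1.1.level)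
        (fun n hn u hu => by
          have hk : k ≤ n := le_trans (le_max_left _ _) hn
          have hi : 2 * i + c + 1 ≤ n := le_trans (le_max_right _ _) hn
          have hp := hu.1.1.parent hmono
          refine ⟨⟨hp, ?_⟩, ?_⟩
          · rw [Nat.div_div_eq_div_mul, ← pow_succ', show n - k + 1 = n + 1 - k by omega]
            exact hu.1.2
          · have := nodeBit_div (v := u) (j := 1) (i := 2 * i + c) (by
              rw [pow_one, log_of_level hp.level.1 hp.level.2]
              exact hi)
            rw [pow_one] at this
            rw [this]
            exact hu.2)
        (fun n hn => by
          obtain ⟨u, -, ⟨h₁, h₂⟩, h₃⟩ := hno n ⟨le_trans (le_max_left _ _) hn,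
            le_trans (le_max_right _ _) hn⟩
          exact ⟨u, ⟨h₁, h₂⟩, h₃⟩)
      set n₁ := max k (2 * i + c + 1)
      have hn₁ := hQ n₁ le_rfl
      refine hall f hf (fun n => ?_) ?_ ⟨i, ?_⟩
      · rw [← hf.div_pow n n₁]
        exact (hQ (n + n₁) (by omega)).1.1.ancestor hmono
      · rw [← hn₁.1.2, hf.div_pow_sub (le_max_left _ _)]
      · rw [hb, ← hf.nodeBit_eq (Nat.lt_succ_self _) (le_max_right k _)]
        exact hn₁.2
  rw [ComputablePred.computable_iff_re_compl_re']
  refine ⟨(rePred_exists (hSprim 1)).of_eq fun i => ?_,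
    (rePred_exists (hSprim 0)).of_eq fun i => ?_⟩
  · rw [hiff, ind]
    split_ifs with h <;> simp [h]
  · rw [hiff, ind]
    split_ifs with h <;> simp [h]

lemma exists_alive_path_disagrees {conv ok : ℕ → ℕ → Prop}
    (hmono : ∀ n s t, s ≤ t → conv n s → conv n t) (hprim : PrimrecRel (Alive conv ok))
    (hlive : ∀ n, ∃ u, Alive conv ok n u) {A B : Set ℕ}
    (hA : ¬ ComputablePred (· ∈ A)) (hB : ¬ ComputablePred (· ∈ B)) :
    ∃ f, IsPath f ∧ (∀ n, Alive conv ok n (f n)) ∧ Disagrees A 0 f ∧ Disagrees B 1 f := by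
  by_contra! hno
  by_cases h : ∃ f, IsPath f ∧ (∀ n, Alive conv ok n (f n)) ∧ Disagrees B 1 f
  · obtain ⟨f, hf, hfl, i, hi⟩ := h
    refine hA (computablePred_of_not_disagrees (c := 0) hmono hprim (k := 2 * i + 1 + 1)
      (fun n hn => ⟨f n, hfl n, hf.div_pow_sub hn⟩) fun f' hf' hfl' he hd => ?_)
    exact hno f' hf' hfl' hd ⟨i, by rwa [he]⟩
  · refine hB (computablePred_of_not_disagrees (c := 1) (k := 0) (v := 1) hmono hprim
      (fun n _ => ?_) fun f hf hfl _ hd => h ⟨f, hf, hfl, hd⟩)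
    obtain ⟨u, hu⟩ := hlive n
    refine ⟨u, hu, ?_⟩
    have := div_two_pow_bounds (Nat.zero_le n) hu.level.1 hu.level.2
    norm_num at this
    simp only [Nat.sub_zero]
    omega

/-- There is a primitive recursive criterion of acceptability which, for paths having a primitive
recursive approximation, decides in the limit whether the path disagrees with `D`. -/
lemma exists_criterion (D : Set ℕ) (c : ℕ) :
    ∃ ok : ℕ → ℕ → Prop, PrimrecRel ok ∧
      (∀ v, (∀ᶠ n in atTop, ok v n) ∨ ∀ᶠ n in atTop, ¬ ok v n) ∧
      (∀ f l : ℕ → ℕ, IsPath f → Primrec l →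
        (∀ k, ∀ᶠ n in atTop, l n / 2 ^ (n - k) = f k) →
        (∃ k, ∀ᶠ n in atTop, ok (f k) n) → Disagrees D c f) ∧
      ∀ f, IsPath f → Disagrees D c f → ∀ᶠ k in atTop, ∀ᶠ n in atTop, ok (f k) n := by
  by_cases hD : ∃ a : ℕ → ℕ → ℕ, Primrec₂ a ∧ ∀ x, ∀ᶠ s in atTop, a x s = ind D x
  · obtain ⟨a, ha, hlim⟩ := hD
    have hall : ∀ v, ∀ᶠ n in atTop, ∀ x ∈ Set.Iio v, a x n = ind D x := fun v =>
      (eventually_all_finite (Set.finite_Iio v)).2 fun x _ => hlim x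
    have hev : ∀ v, ∀ᶠ n in atTop,
        (∃ x < v, 2 * x + c < Nat.log 2 v ∧ nodeBit v (2 * x + c) ≠ a x n) ↔
          ∃ x < v, 2 * x + c < Nat.log 2 v ∧ nodeBit v (2 * x + c) ≠ ind D x := fun v => by
      filter_upwards [hall v] with n hn
      exact exists_congr fun x => and_congr_right fun hx => by rw [hn x hx]
    refine ⟨fun v n => ∃ x < v, 2 * x + c < Nat.log 2 v ∧ nodeBit v (2 * x + c) ≠ a x n,
      ?_, fun v => ?_, ?_, ?_⟩
    · have hi : Primrec fun q : (ℕ × ℕ) × ℕ => 2 * q.2 + c :=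
        Primrec.nat_add.comp (Primrec.nat_mul.comp (Primrec.const 2) Primrec.snd) (Primrec.const c)
      have hv : Primrec fun q : (ℕ × ℕ) × ℕ => q.1.1 := Primrec.fst.comp Primrec.fst
      exact primrecPred_exists_lt Primrec.fst ((Primrec.nat_lt.comp hi (primrec_log.comp hv)).and
        (Primrec.eq.comp (primrec_nodeBit.comp hv hi)
          (ha.comp Primrec.snd (Primrec.snd.comp Primrec.fst))).not)
    · by_cases h : ∃ x < v, 2 * x + c < Nat.log 2 v ∧ nodeBit v (2 * x + c) ≠ ind D x
      · exact Or.inl ((hev v).mono fun n hn => hn.2 h)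
      · exact Or.inr ((hev v).mono fun n hn => mt hn.1 h)
    · rintro f l hf - - ⟨k, hk⟩
      obtain ⟨n, h₁, h₂⟩ := (hk.and (hev (f k))).exists
      obtain ⟨x, -, hx, hne⟩ := h₂.1 h₁
      rw [hf.log] at hx
      exact ⟨x, by rwa [← hf.nodeBit_eq (Nat.lt_succ_self _) hx]⟩
    · rintro f hf ⟨i, hi⟩
      filter_upwards [eventually_ge_atTop (2 * i + c + 1)] with k hk
      refine (hev (f k)).mono fun n hn => hn.2 ⟨i, ?_, ?_, ?_⟩
      · have := (hf.level k).1
        have := Nat.lt_two_pow_self (n := k)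
        omega
      · rw [hf.log]
        exact hk
      · rwa [hf.nodeBit_eq (Nat.lt_succ_self _) hk]
  · refine ⟨fun _ _ => True, ⟨fun _ => instDecidableTrue, Primrec.const true⟩,
      fun _ => Or.inl (by simp), ?_, by simp⟩
    intro f l hf hl hlim _
    by_contra hno
    simp only [Disagrees, not_exists, not_not] at hno
    refine hD ⟨fun x s => nodeBit (l s / 2 ^ (s - (2 * x + c + 1))) (2 * x + c), ?_, fun x => ?_⟩
    · have hi : Primrec fun q : ℕ × ℕ => 2 * q.1 + c :=
        Primrec.nat_add.comp (Primrec.nat_mul.comp (Primrec.const 2) Primrec.fst) (Primrec.const c)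
      exact primrec_nodeBit.comp (primrec_div_two_pow (hl.comp Primrec.snd)
        (Primrec.nat_sub.comp Primrec.snd (Primrec.succ.comp hi))) hi
    · filter_upwards [hlim (2 * x + c + 1)] with n hn
      rw [hn, hno x]

section Primrec

variable {α : Type*} [Primcodable α] {conv : ℕ → ℕ → ℕ → Prop} {ok : ℕ → ℕ → Prop}

lemma primrecPred_live (hconv : PrimrecPred fun q : (ℕ × ℕ) × ℕ => conv q.1.1 q.1.2 q.2)
    {e n u : α → ℕ} {used : α → List ℕ} (he : Primrec e) (hn : Primrec n) (hu : Primrec u)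
    (hused : Primrec used) : PrimrecPred fun a => Live (conv (e a)) (used a) (n a) (u a) := by
  refine (Primrec.nat_le.comp (primrec_two_pow.comp hn) hu).and
    ((Primrec.nat_lt.comp hu (primrec_two_pow.comp (Primrec.succ.comp hn))).and
      (primrecPred_forall_lt hn ?_))
  have hc : PrimrecPred fun q : α × ℕ => conv (e q.1) q.2 (n q.1) :=
    hconv.comp (((he.comp Primrec.fst).pair Primrec.snd).pair (hn.comp Primrec.fst))
  have ha : Primrec fun q : (α × ℕ) × ℕ => q.1.1 := Primrec.fst.comp Primrec.fst
  have ht : PrimrecPred fun q : α × ℕ =>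
      ∀ i < n q.1 + 1, u q.1 / 2 ^ i ≠ (used q.1).getD q.2 0 :=
    primrecPred_forall_lt (Primrec.succ.comp (hn.comp Primrec.fst))
      (Primrec.eq.comp (primrec_div_two_pow (hu.comp ha) Primrec.snd)
        ((Primrec.list_getD 0).comp (hused.comp ha) (Primrec.snd.comp Primrec.fst))).not
  exact (hc.not.or ht).of_eq fun q => imp_iff_not_or.symm

lemma primrec_findGreatest {f : α → ℕ} {p : α → ℕ → Prop} [∀ a, DecidablePred (p a)]
    (hf : Primrec f) (hp : PrimrecRel p) : Primrec fun a => Nat.findGreatest (p a) (f a) := by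
  have : DecidableRel p := fun a => inferInstance
  convert Primrec.nat_findGreatest hf hp

lemma primrec_best (hconv : PrimrecPred fun q : (ℕ × ℕ) × ℕ => conv q.1.1 q.1.2 q.2)
    (hok : PrimrecRel ok) {e n : α → ℕ} {used : α → List ℕ} (he : Primrec e) (hn : Primrec n)
    (hused : Primrec used) : Primrec fun a => best (conv (e a)) ok (used a) (n a) := by
  have hpow : Primrec fun a => 2 ^ (n a + 1) := primrec_two_pow.comp (Primrec.succ.comp hn)
  have hj : Primrec fun q : (α × ℕ) × ℕ => q.1.1 := Primrec.fst.comp Primrec.fst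
  classical
  refine primrec_findGreatest hpow ((primrecPred_live hconv (he.comp Primrec.fst)
    (hn.comp Primrec.fst) Primrec.snd (hused.comp Primrec.fst)).and
    (hok.comp (primrec_div_two_pow Primrec.snd (Primrec.comp
      (f := fun a => Nat.findGreatest (fun j => ∃ u < 2 ^ (n a + 1),
        Live (conv (e a)) (used a) (n a) u ∧ ok (u / 2 ^ j) (n a)) (n a))
      (primrec_findGreatest hn (primrecPred_exists_lt (hpow.comp Primrec.fst) ?_)) Primrec.fst))
    (hn.comp Primrec.fst)))
  exact (primrecPred_live hconv (he.comp hj) (hn.comp hj) Primrec.snd (hused.comp hj)).and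
    (hok.comp (primrec_div_two_pow Primrec.snd (Primrec.snd.comp Primrec.fst)) (hn.comp hj))

lemma primrec_step (hconv : PrimrecPred fun q : (ℕ × ℕ) × ℕ => conv q.1.1 q.1.2 q.2)
    (hok : PrimrecRel ok) {e n : α → ℕ} {used : α → List ℕ} (he : Primrec e) (hn : Primrec n)
    (hused : Primrec used) : Primrec fun a => step (conv (e a)) ok (used a) (n a) := by
  have hb := primrec_best hconv hok he hn hused
  have hj : Primrec fun q : (α × ℕ) × ℕ => q.1.1 := Primrec.fst.comp Primrec.fst
  classical
  exact primrec_div_two_pow hb (primrec_findGreatest hn (primrecPred_forall_lt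
    (hn.comp Primrec.fst) (Primrec.eq.comp
      ((Primrec.list_getD 0).comp (hused.comp hj) Primrec.snd)
      (primrec_div_two_pow (hb.comp hj) (Primrec.snd.comp Primrec.fst))).not))

lemma primrec_tests (hconv : PrimrecPred fun q : (ℕ × ℕ) × ℕ => conv q.1.1 q.1.2 q.2)
    (hok : PrimrecRel ok) : Primrec₂ fun e n => tests (conv e) ok n := by
  have hs : Primrec fun q : ℕ × ℕ × List ℕ => q.2.2 := Primrec.snd.comp Primrec.snd
  refine (Primrec.nat_rec (f := fun _ : ℕ => ([] : List ℕ))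
    (g := fun e (q : ℕ × List ℕ) => q.2 ++ [step (conv e) ok q.2 q.1]) (Primrec.const [])
    (Primrec.list_concat.comp hs (primrec_step hconv hok Primrec.fst
      (Primrec.fst.comp Primrec.snd) hs))).of_eq fun e n => ?_
  induction n with
  | zero => rfl
  | succ n ih =>
    rw [tests, ← ih]

lemma primrec_test (hconv : PrimrecPred fun q : (ℕ × ℕ) × ℕ => conv q.1.1 q.1.2 q.2)
    (hok : PrimrecRel ok) : Primrec₂ fun e n => test (conv e) ok n :=
  primrec_step hconv hok Primrec.fst Primrec.snd (primrec_tests hconv hok)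

lemma primrec_approx (hconv : PrimrecPred fun q : (ℕ × ℕ) × ℕ => conv q.1.1 q.1.2 q.2)
    (hok : PrimrecRel ok) (e : ℕ) : Primrec (approx (conv e) ok) :=
  primrec_best hconv hok (Primrec.const e) Primrec.id
    ((primrec_tests hconv hok).comp (Primrec.const e) Primrec.id)

lemma primrecRel_alive (hconv : PrimrecPred fun q : (ℕ × ℕ) × ℕ => conv q.1.1 q.1.2 q.2)
    (hok : PrimrecRel ok) (e : ℕ) : PrimrecRel (Alive (conv e) ok) :=
  primrecPred_live hconv (Primrec.const e) Primrec.fst Primrec.snd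
    ((primrec_tests hconv hok).comp (Primrec.const e) Primrec.fst)

end Primrec

/-! ### Computations with an oracle -/

lemma recIn_of_partrec {O f : ℕ →. ℕ} (hf : Nat.Partrec f) : RecIn O f := by
  induction hf with
  | zero => exact .zero
  | succ => exact .succ
  | left => exact .left
  | right => exact .right
  | pair _ _ h₁ h₂ => exact .pair h₁ h₂
  | comp _ _ h₁ h₂ => exact .comp h₁ h₂
  | prec _ _ h₁ h₂ => exact .prec h₁ h₂
  | rfind _ h => exact .rfind h

/-- A set `D` can recognize the nodes which disagree with it, so it can generically compute any set
which contains no number labelled by such a node, provided few numbers have another label. -/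
lemma genericallyComputes_of_label {D C : Set ℕ} {c : ℕ} {z T : ℕ → ℕ} (hz : ∀ i, z i < 2)
    (hzD : ∀ i, z (2 * i + c) = ind D i) (hT : Primrec T) (hC : ∀ x ∈ C, ∃ k, T x = pathOf z k)
    (hdens : Density1 {x | T x = 0 ∨
      ∃ i, 2 * i + c < Nat.log 2 (T x) ∧ nodeBit (T x) (2 * i + c) ≠ ind D i}) :
    GenericallyComputes D C := by
  classical
  set P : ℕ → ℕ → ℕ → Prop := fun x i b =>
    T x = 0 ∨ 2 * i + c < Nat.log 2 (T x) ∧ nodeBit (T x) (2 * i + c) ≠ b with hP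
  set G : ℕ → ℕ := fun q => if P q.unpair.1.unpair.1 q.unpair.1.unpair.2 q.unpair.2 then 0 else 1
    with hG
  have hGprim : Primrec G := by
    have h₁ : Primrec fun q : ℕ => q.unpair.1.unpair := Primrec.unpair.comp
      (Primrec.fst.comp Primrec.unpair)
    have hx : Primrec fun q : ℕ => T q.unpair.1.unpair.1 := hT.comp (Primrec.fst.comp h₁)
    have hi : Primrec fun q : ℕ => 2 * q.unpair.1.unpair.2 + c :=
      Primrec.nat_add.comp (Primrec.nat_mul.comp (Primrec.const 2) (Primrec.snd.comp h₁))
        (Primrec.const c)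
    exact Primrec.ite ((Primrec.eq.comp hx (Primrec.const 0)).or
      ((Primrec.nat_lt.comp hi (primrec_log.comp hx)).and
        (Primrec.eq.comp (primrec_nodeBit.comp hx hi) (Primrec.snd.comp Primrec.unpair)).not))
      (Primrec.const 0) (Primrec.const 1)
  have hrec : RecIn (chi D) fun q : ℕ => Part.some (G (Nat.pair q (ind D q.unpair.2))) := by
    have hid : RecIn (chi D) fun q : ℕ => Part.some q :=
      recIn_of_partrec (Nat.Partrec.some)
    have hGrec : RecIn (chi D) (G : ℕ →. ℕ) :=
      recIn_of_partrec (Partrec.nat_iff.1 hGprim.to_comp.partrec)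
    have hpair := hid.pair (RecIn.oracle.comp RecIn.right)
    refine Eq.subst (motive := RecIn (chi D)) (funext fun q => ?_) (hGrec.comp hpair)
    change ((Part.some (Nat.pair q)).bind fun h => ((Part.some q.unpair.2).bind
      fun i => Part.some (ind D i)).map h).bind (fun r => Part.some (G r)) = _
    simp only [Part.bind_some, Part.map_some]
  obtain ⟨φ, hφ, hmem⟩ : ∃ φ, RecIn (chi D) φ ∧
      ∀ x v, v ∈ φ x ↔ v = 0 ∧ ∃ i, P x i (ind D i) := by
    refine ⟨_, RecIn.zero.comp hrec.rfind, fun x v => ?_⟩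
    refine Part.mem_bind_iff.trans ?_
    have hdom := Nat.rfind_dom (p := fun i => (fun m => decide (m = 0)) <$>
      Part.some (G (Nat.pair (Nat.pair x i) (ind D (Nat.pair x i).unpair.2))))
    have hv : ∀ i, v ∈ (pure 0 : ℕ →. ℕ) i ↔ v = 0 := fun i => Part.mem_some_iff
    simp only [hv, and_comm, exists_and_left, ← Part.dom_iff_mem]
    refine and_congr_right fun _ => hdom.trans ?_
    simp [hG]
  have hdom : ∀ x, (φ x).Dom ↔ ∃ i, P x i (ind D i) := fun x => by
    simp [Part.dom_iff_mem, hmem]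
  refine ⟨φ, hφ, ?_, fun x v h => Or.inl ((hmem x v).1 h).1,
    fun x h => absurd ((hmem x 1).1 h).1 one_ne_zero, fun x h hx => ?_⟩
  · convert hdens using 1
    ext x
    simp only [Set.mem_ofPred_eq, hdom, hP, exists_or, exists_const]
  · obtain ⟨-, i, hi⟩ := (hmem x 0).1 h
    obtain ⟨k, hk⟩ := hC x hx
    have hp := isPath_pathOf hz
    simp only [hP, hk] at hi
    rcases hi with hi | ⟨hi, hne⟩
    · have := (hp.level k).1
      have := Nat.two_pow_pos k
      omega
    · rw [hp.log] at hi
      rw [nodeBit_pathOf hz hi, hzD] at hne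
      exact hne rfl

/-! ### Density -/

lemma ncard_Iio (n : ℕ) : (Set.Iio n).ncard = n := by
  rw [Set.ncard_eq_toFinset_card', Set.toFinset_Iio, Nat.card_Iio]

lemma density1_of_forall_dvd {S : Set ℕ}
    (h : ∀ E, ∀ᶠ x in atTop, x ∉ S → 2 ^ E ∣ x) : Density1 S := by
  have hle : ∀ n, partialDensity S n ≤ 1 := fun n => by
    refine div_le_one_of_le₀ ?_ (Nat.cast_nonneg n)
    have := Set.ncard_le_ncard (Set.inter_subset_right (s := S)) (Set.finite_Iio n)
    rw [ncard_Iio] at this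
    exact_mod_cast this
  refine tendsto_order.2 ⟨fun a ha => ?_, fun a ha => Eventually.of_forall fun n =>
    (hle n).trans_lt ha⟩
  obtain ⟨E, hE⟩ := exists_pow_lt_of_lt_one (sub_pos.2 ha) (by norm_num : (1 / 2 : ℝ) < 1)
  obtain ⟨b, hb⟩ := eventually_atTop.1 (h E)
  have hcount : ∀ n : ℕ, (n : ℝ) ≤ ((S ∩ Set.Iio n).ncard : ℝ) + b + (n * (1 / 2) ^ E + 1) := by
    intro n
    have hsub : Set.Iio n ⊆ (S ∩ Set.Iio n) ∪ (Set.Iio b ∪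
        (fun y => 2 ^ E * y) '' Set.Iio (n / 2 ^ E + 1)) := by
      intro x hx
      by_cases hxS : x ∈ S
      · exact Or.inl ⟨hxS, hx⟩
      rcases lt_or_ge x b with hxb | hxb
      · exact Or.inr (Or.inl hxb)
      · obtain ⟨y, rfl⟩ := hb x hxb hxS
        refine Or.inr (Or.inr ⟨y, Nat.lt_succ_of_le ?_, rfl⟩)
        rw [Nat.le_div_iff_mul_le (by positivity), mul_comm]
        exact (Set.mem_Iio.1 hx).le
    have h₁ := Set.ncard_le_ncard hsub
      (((Set.finite_Iio n).inter_of_right S).union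
        ((Set.finite_Iio b).union ((Set.finite_Iio _).image _)))
    have h₂ := Set.ncard_union_le (S ∩ Set.Iio n) (Set.Iio b ∪
        (fun y => 2 ^ E * y) '' Set.Iio (n / 2 ^ E + 1))
    have h₃ := Set.ncard_union_le (Set.Iio b) ((fun y => 2 ^ E * y) '' Set.Iio (n / 2 ^ E + 1))
    have h₄ := Set.ncard_image_le (f := fun y => 2 ^ E * y) (Set.finite_Iio (n / 2 ^ E + 1))
    rw [ncard_Iio] at h₁ h₃ h₄
    have h₆ : ((n / 2 ^ E : ℕ) : ℝ) ≤ n * (1 / 2) ^ E := by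
      refine Nat.cast_div_le.trans (le_of_eq ?_)
      push_cast
      rw [one_div, inv_pow, div_eq_mul_inv]
    have h₇ : (n : ℝ) ≤ ((S ∩ Set.Iio n).ncard : ℝ) + (b + ((n / 2 ^ E : ℕ) + 1)) := by
      exact_mod_cast (by omega : n ≤ (S ∩ Set.Iio n).ncard + (b + (n / 2 ^ E + 1)))
    linarith
  have hlarge : ∀ᶠ n : ℕ in atTop, ((b : ℝ) + 1) / (1 - a - (1 / 2) ^ E) < n :=
    tendsto_natCast_atTop_atTop.eventually_gt_atTop _
  filter_upwards [hlarge, eventually_gt_atTop 0] with n hn hn₀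
  rw [div_lt_iff₀ (by linarith)] at hn
  rw [partialDensity, lt_div_iff₀ (by exact_mod_cast hn₀)]
  linarith [hcount n]

/-- The exponent of the greatest power of two dividing `x`. -/
def v2 (x : ℕ) : ℕ := Nat.findGreatest (fun k => 2 ^ k ∣ x) x

lemma two_pow_v2_dvd (x : ℕ) : 2 ^ v2 x ∣ x :=
  Nat.findGreatest_spec (P := fun k => 2 ^ k ∣ x) (Nat.zero_le x) (by simp)

lemma v2_eq {e m x : ℕ} (h : x = 2 ^ e * (2 * m + 1)) : v2 x = e := by
  rw [v2, Nat.findGreatest_eq_iff]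
  refine ⟨?_, fun _ => ⟨_, h⟩, fun k hk _ hd => ?_⟩
  · have := Nat.lt_two_pow_self (n := e)
    rw [h]
    nlinarith
  · have h₁ := (pow_dvd_pow 2 (Nat.succ_le_of_lt hk)).trans hd
    rw [h, pow_succ, Nat.mul_dvd_mul_iff_left (by positivity)] at h₁
    omega

lemma primrec_v2 : Primrec v2 := by
  refine Primrec.nat_findGreatest Primrec.id ((Primrec.eq.comp (Primrec.nat_mod.comp Primrec.fst
    (primrec_two_pow.comp Primrec.snd)) (Primrec.const 0)).of_eq fun q => ?_)
  exact (Nat.dvd_iff_mod_eq_zero).symm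

/-- A set of density 1 meets almost all of the sets `{x | log x = n, v2 x = e}`. -/
lemma eventually_exists_mem {S : Set ℕ} (hS : Density1 S) (e : ℕ) :
    ∀ᶠ n in atTop, ∃ x ∈ S, v2 x = e ∧ Nat.log 2 x = n := by
  have hlim := (hS.comp (tendsto_pow_atTop_atTop_of_one_lt (one_lt_two (α := ℕ)))).comp
    (tendsto_add_atTop_nat 1)
  have hpos : (1 : ℝ) - (1 / 2) ^ (e + 2) < 1 := sub_lt_self _ (by positivity)
  filter_upwards [hlim.eventually (eventually_gt_nhds hpos), eventually_ge_atTop (e + 1)]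
    with n hn hen
  by_contra! hno
  obtain ⟨m, rfl⟩ := Nat.exists_eq_add_of_le hen
  set b : ℕ → ℕ := fun y => 2 ^ e * (2 * (2 ^ m + y) + 1) with hb
  have hpow : 2 ^ (e + 1 + m) = 2 ^ e * (2 * 2 ^ m) := by ring
  have hbinj : Function.Injective b := fun y y' h => by
    have := Nat.eq_of_mul_eq_mul_left (by positivity : 0 < 2 ^ e) h
    omega
  have hlev : ∀ y < 2 ^ m, 2 ^ (e + 1 + m) ≤ b y ∧ b y < 2 ^ (e + 1 + m + 1) := by
    intro y hy
    rw [pow_succ, hpow, mul_assoc]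
    exact ⟨Nat.mul_le_mul_left _ (by omega), Nat.mul_lt_mul_of_pos_left (by omega) (by positivity)⟩
  have hdisj : Disjoint (S ∩ Set.Iio (2 ^ (e + 1 + m + 1))) (b '' Set.Iio (2 ^ m)) := by
    rw [Set.disjoint_right]
    rintro _ ⟨y, hy, rfl⟩ hyS
    exact hno _ hyS.1 (v2_eq rfl) (log_of_level (hlev y hy).1 (hlev y hy).2)
  have hcard := Set.ncard_le_ncard (s := (S ∩ Set.Iio (2 ^ (e + 1 + m + 1))) ∪ b '' Set.Iio (2 ^ m))
    (t := Set.Iio (2 ^ (e + 1 + m + 1))) (Set.union_subset Set.inter_subset_right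
      (by rintro _ ⟨y, hy, rfl⟩; exact (hlev y hy).2)) (Set.finite_Iio _)
  rw [Set.ncard_union_eq hdisj ((Set.finite_Iio _).inter_of_right S)
    ((Set.finite_Iio _).image _), Set.ncard_image_of_injective _ hbinj, ncard_Iio, ncard_Iio] at hcard
  have hreal : ((S ∩ Set.Iio (2 ^ (e + 1 + m + 1))).ncard : ℝ) + 2 ^ m ≤ 2 ^ (e + 1 + m + 1) := by
    exact_mod_cast hcard
  simp only [Function.comp_apply, partialDensity] at hn
  rw [lt_div_iff₀ (by positivity)] at hn
  have hsplit : (1 / 2 : ℝ) ^ (e + 2) * ((2 ^ (e + 1 + m + 1) : ℕ) : ℝ) = 2 ^ m := by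
    rw [show e + 1 + m + 1 = (e + 2) + m by ring]
    push_cast
    rw [pow_add 2 (e + 2) m, ← mul_assoc, ← mul_pow]
    norm_num
  push_cast at hn hsplit
  linarith

/-! ### The construction -/

/-- The computation with index `e` has converged by stage `s` on some argument `x` with
`log x = n` and `v2 x = e`. -/
def Converged (e n s : ℕ) : Prop :=
  ∃ x < 2 ^ (n + 1), (v2 x = e ∧ Nat.log 2 x = n) ∧
    (Nat.Partrec.Code.evaln s (Denumerable.ofNat Nat.Partrec.Code e) x).isSome

lemma converged_mono (e n s t : ℕ) (hst : s ≤ t) (h : Converged e n s) : Converged e n t := by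
  obtain ⟨x, hx, hxe, hs⟩ := h
  obtain ⟨y, hy⟩ := Option.isSome_iff_exists.1 hs
  exact ⟨x, hx, hxe, Option.isSome_iff_exists.2 ⟨y, Nat.Partrec.Code.evaln_mono hst hy⟩⟩

lemma primrecPred_converged :
    PrimrecPred fun q : (ℕ × ℕ) × ℕ => Converged q.1.1 q.1.2 q.2 := by
  have hq : Primrec fun r : ((ℕ × ℕ) × ℕ) × ℕ => r.1 := Primrec.fst
  have he : Primrec fun r : ((ℕ × ℕ) × ℕ) × ℕ => r.1.1.1 :=
    Primrec.fst.comp (Primrec.fst.comp hq)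
  have hn : Primrec fun r : ((ℕ × ℕ) × ℕ) × ℕ => r.1.1.2 :=
    Primrec.snd.comp (Primrec.fst.comp hq)
  refine primrecPred_exists_lt
    (primrec_two_pow.comp (Primrec.succ.comp (Primrec.snd.comp Primrec.fst)))
    (((Primrec.eq.comp (primrec_v2.comp Primrec.snd) he).and
      (Primrec.eq.comp (primrec_log.comp Primrec.snd) hn)).and ?_)
  refine (Primrec.eq.comp (Primrec.option_isSome.comp (Nat.Partrec.Code.primrec_evaln.comp
    (((Primrec.snd.comp hq).pair ((Primrec.ofNat Nat.Partrec.Code).comp he)).pair Primrec.snd)))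
    (Primrec.const true))

section Construction

variable {A B : Set ℕ} {ok : ℕ → ℕ → Prop}

/-- If the domain of a computation meets almost all of its sets of arguments, then eventually no
node is alive. -/
lemma exists_forall_not_alive {conv : ℕ → ℕ → Prop}
    (hmono : ∀ n s t, s ≤ t → conv n s → conv n t) (hprim : PrimrecRel (Alive conv ok))
    (hconst : ∀ v, (∀ᶠ n in atTop, ok v n) ∨ ∀ᶠ n in atTop, ¬ ok v n)
    (hok : ∀ f, IsPath f → Disagrees A 0 f → Disagrees B 1 f →
      ∃ k, ∀ᶠ n in atTop, ok (f k) n)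
    (hA : ¬ ComputablePred (· ∈ A)) (hB : ¬ ComputablePred (· ∈ B))
    (hconv : ∀ᶠ n in atTop, ∃ s, conv n s) : ∃ N, ∀ u, ¬ Alive conv ok N u := by
  by_contra! hlive
  obtain ⟨f, hf, hfl, hfA, hfB⟩ := exists_alive_path_disagrees hmono hprim hlive hA hB
  obtain ⟨k, hk⟩ := hok f hf hfA hfB
  obtain ⟨g, hg, hgl, -, hlim⟩ := exists_limit_path hmono hconst hf hfl hk
  exact not_eventually_conv hmono hg hlim hgl hconv

/-- Almost all nodes tested by the strategy disagree with `D`. -/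
lemma eventually_test_disagrees {conv : ℕ → ℕ → Prop} {D : Set ℕ} {c : ℕ}
    (hmono : ∀ n s t, s ≤ t → conv n s → conv n t) (hprim : PrimrecRel (Alive conv ok))
    (happrox : Primrec (approx conv ok))
    (hconst : ∀ v, (∀ᶠ n in atTop, ok v n) ∨ ∀ᶠ n in atTop, ¬ ok v n)
    (hok : ∀ f, IsPath f → Disagrees A 0 f → Disagrees B 1 f →
      ∃ k, ∀ᶠ n in atTop, ok (f k) n)
    (hA : ¬ ComputablePred (· ∈ A)) (hB : ¬ ComputablePred (· ∈ B))
    (hD : ∀ f l : ℕ → ℕ, IsPath f → Primrec l →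
      (∀ k, ∀ᶠ n in atTop, l n / 2 ^ (n - k) = f k) →
      (∃ k, ∀ᶠ n in atTop, ok (f k) n) → Disagrees D c f) :
    ∀ᶠ n in atTop, test conv ok n = 0 ∨ ∃ i, 2 * i + c < Nat.log 2 (test conv ok n) ∧
      nodeBit (test conv ok n) (2 * i + c) ≠ ind D i := by
  by_cases hlive : ∀ n, ∃ u, Alive conv ok n u
  · obtain ⟨f, hf, hfl, hfA, hfB⟩ := exists_alive_path_disagrees hmono hprim hlive hA hB
    obtain ⟨k, hk⟩ := hok f hf hfA hfB
    obtain ⟨g, hg, -, hgok, hlim⟩ := exists_limit_path hmono hconst hf hfl hk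
    obtain ⟨i, hi⟩ := hD g _ hg happrox hlim hgok
    filter_upwards [eventually_nodeBit_test hg hlim (2 * i + c)] with n hn
    exact Or.inr ⟨i, hn.1, by rwa [hn.2]⟩
  · push Not at hlive
    obtain ⟨N, hN⟩ := hlive
    exact (eventually_test_eq_zero hmono hN).mono fun n hn => Or.inl hn

/-- The set consisting of the arguments `x` labelled by a prefix of `z` at which the computation
with index `v2 x` has the value `0`. -/
def diagonalSet (ok : ℕ → ℕ → Prop) (z : ℕ → ℕ) : Set ℕ :=
  {x | (∃ k, test (Converged (v2 x)) ok (Nat.log 2 x) = pathOf z k) ∧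
    0 ∈ (Denumerable.ofNat Nat.Partrec.Code (v2 x)).eval x}

lemma not_genericallyComputable_diagonalSet (hprim : PrimrecRel ok)
    (hconst : ∀ v, (∀ᶠ n in atTop, ok v n) ∨ ∀ᶠ n in atTop, ¬ ok v n)
    (hok : ∀ f, IsPath f → Disagrees A 0 f → Disagrees B 1 f →
      ∃ k, ∀ᶠ n in atTop, ok (f k) n)
    (hA : ¬ ComputablePred (· ∈ A)) (hB : ¬ ComputablePred (· ∈ B))
    {z : ℕ → ℕ} (hz : ∀ i, z i < 2) : ¬ GenericallyComputable (diagonalSet ok z) := by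
  rintro ⟨φ, hφ, hdens, hval, h₁, h₀⟩
  obtain ⟨code, rfl⟩ := Nat.Partrec.Code.exists_code.1 hφ
  set e := Encodable.encode code with he
  have hcode : Denumerable.ofNat Nat.Partrec.Code e = code := Denumerable.ofNat_encode code
  obtain ⟨N, hN⟩ := exists_forall_not_alive (converged_mono e)
    (primrecRel_alive primrecPred_converged hprim e) hconst hok hA hB (by
      filter_upwards [eventually_exists_mem hdens e] with n hn
      obtain ⟨x, hx, hxe, hxn⟩ := hn
      obtain ⟨y, hy⟩ := Part.dom_iff_mem.1 hx
      obtain ⟨s, hs⟩ := Nat.Partrec.Code.evaln_complete.1 hy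
      refine ⟨s, x, ?_, ⟨hxe, hxn⟩, ?_⟩
      · rw [← hxn]
        exact Nat.lt_pow_succ_log_self (by norm_num) x
      · rw [hcode]
        exact Option.isSome_iff_exists.2 ⟨y, hs⟩)
  obtain ⟨n, -, ⟨x, -, ⟨hxe, hxn⟩, hs⟩, k, hk⟩ := exists_test_of_not_alive hN (isPath_pathOf hz)
  obtain ⟨y, hy⟩ := Option.isSome_iff_exists.1 hs
  rw [hcode] at hy
  have hy' := Nat.Partrec.Code.evaln_sound hy
  have hmem : x ∈ diagonalSet ok z ↔ 0 ∈ code.eval x := by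
    simp only [diagonalSet, Set.mem_ofPred_eq, hxe, hxn, hcode]
    exact and_iff_right ⟨k, hk⟩
  rcases hval x y hy' with rfl | rfl
  · exact h₀ x hy' (hmem.2 hy')
  · exact absurd (Part.mem_unique hy' (hmem.1 (h₁ x hy'))) one_ne_zero

lemma genericallyComputes_diagonalSet {D : Set ℕ} {c : ℕ} (hprim : PrimrecRel ok)
    (hconst : ∀ v, (∀ᶠ n in atTop, ok v n) ∨ ∀ᶠ n in atTop, ¬ ok v n)
    (hok : ∀ f, IsPath f → Disagrees A 0 f → Disagrees B 1 f →
      ∃ k, ∀ᶠ n in atTop, ok (f k) n)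
    (hA : ¬ ComputablePred (· ∈ A)) (hB : ¬ ComputablePred (· ∈ B))
    (hD : ∀ f l : ℕ → ℕ, IsPath f → Primrec l →
      (∀ k, ∀ᶠ n in atTop, l n / 2 ^ (n - k) = f k) →
      (∃ k, ∀ᶠ n in atTop, ok (f k) n) → Disagrees D c f)
    {z : ℕ → ℕ} (hz : ∀ i, z i < 2) (hzD : ∀ i, z (2 * i + c) = ind D i) :
    GenericallyComputes D (diagonalSet ok z) := by
  refine genericallyComputes_of_label hz hzD
    (T := fun x => test (Converged (v2 x)) ok (Nat.log 2 x))
    ((primrec_test primrecPred_converged hprim).comp primrec_v2 primrec_log)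
    (fun x hx => hx.1) (density1_of_forall_dvd fun E => ?_)
  have hev := (eventually_all_finite (Set.finite_Iio E)).2 fun e _ =>
    eventually_test_disagrees (converged_mono e) (primrecRel_alive primrecPred_converged hprim e)
      (primrec_approx primrecPred_converged hprim e) hconst hok hA hB hD
  obtain ⟨N, hN⟩ := eventually_atTop.1 hev
  filter_upwards [eventually_ge_atTop (2 ^ N)] with x hx hxS
  refine (pow_dvd_pow 2 (not_lt.1 fun hlt => hxS ?_)).trans (two_pow_v2_dvd x)
  exact hN _ (Nat.le_log_of_pow_le (by norm_num) hx) _ hlt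

end Construction

end GenericPair

/-- There are no minimal pairs for generic computability: for any nonrecursive sets
`A` and `B` there is a set `C`, not generically computable, which is generically
computable from each of `A` and `B`. -/
theorem no_minimal_pairs_for_generic_computability (A B : Set ℕ)
    (hA : ¬ ComputablePred (· ∈ A)) (hB : ¬ ComputablePred (· ∈ B)) :
    ∃ C : Set ℕ, ¬ GenericallyComputable C ∧
      GenericallyComputes A C ∧ GenericallyComputes B C := by
  obtain ⟨okA, hpA, hcA, hdA, heA⟩ := GenericPair.exists_criterion A 0
  obtain ⟨okB, hpB, hcB, hdB, heB⟩ := GenericPair.exists_criterion B 1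
  have hprim : PrimrecRel fun v n => okA v n ∧ okB v n := PrimrecPred.and hpA hpB
  have hconst : ∀ v, (∀ᶠ n in atTop, okA v n ∧ okB v n) ∨ ∀ᶠ n in atTop, ¬ (okA v n ∧ okB v n) := by
    intro v
    rcases hcA v with h₁ | h₁
    · rcases hcB v with h₂ | h₂
      · exact Or.inl (h₁.and h₂)
      · exact Or.inr (h₂.mono fun n hn h => hn h.2)
    · exact Or.inr (h₁.mono fun n hn h => hn h.1)
  have hok : ∀ f, GenericPair.IsPath f → GenericPair.Disagrees A 0 f →
      GenericPair.Disagrees B 1 f → ∃ k, ∀ᶠ n in atTop, okA (f k) n ∧ okB (f k) n := by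
    intro f hf h₁ h₂
    obtain ⟨k, hk₁, hk₂⟩ := ((heA f hf h₁).and (heB f hf h₂)).exists
    exact ⟨k, hk₁.and hk₂⟩
  set z : ℕ → ℕ := fun n =>
    if n % 2 = 0 then GenericPair.ind A (n / 2) else GenericPair.ind B (n / 2) with hz_def
  have hind : ∀ (D : Set ℕ) i, GenericPair.ind D i < 2 := fun D i => by
    unfold GenericPair.ind
    split_ifs <;> norm_num
  have hz : ∀ i, z i < 2 := fun i => by
    simp only [hz_def]
    split_ifs <;> exact hind _ _
  refine ⟨GenericPair.diagonalSet (fun v n => okA v n ∧ okB v n) z,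
    GenericPair.not_genericallyComputable_diagonalSet hprim hconst hok hA hB hz,
    GenericPair.genericallyComputes_diagonalSet (c := 0) hprim hconst hok hA hB
      (fun f l hf hl hlim ⟨k, hk⟩ => hdA f l hf hl hlim ⟨k, hk.mono fun _ h => h.1⟩) hz
      (fun i => by simp [hz_def]),
    GenericPair.genericallyComputes_diagonalSet (c := 1) hprim hconst hok hA hB
      (fun f l hf hl hlim ⟨k, hk⟩ => hdB f l hf hl hlim ⟨k, hk.mono fun _ h => h.2⟩) hz
      (fun i => ?_)⟩
  simp only [hz_def]
  rw [if_neg (by omega), show (2 * i + 1) / 2 = i by omega]
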